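/- Fix T > 0 and a > 0. For every continuous θ : [0,T] → 𝒳ₙ, the radial interaction functional Φ^{0,a}_T(θ) is a finite real number and the identity J^a_T(θ) = E_T(θ) − Φ^{0,a}_T(θ) holds in [0,∞] (both sides being ∞ exactly when θ is not absolutely continuous or has infinite Dirichlet energy). -/

import Mathlib

open MeasureTheory Filter Set
open scoped Real Topology ENNReal Classical

noncomputable section

/-- The configuration space `𝒳ₙ` of `n` ordered points on (a lift of) the circle:
`θ¹ < θ² < ⋯ < θⁿ < θ¹ + 2π`. -/
def Xspace (n : ℕ) : Set (Fin n → ℝ) :=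
  {x | StrictMono x ∧ ∀ i j : Fin n, x i < x j + 2 * π}

/-- The value `θ^{j+1}`, with the convention `θ^{n+1} = θ¹ + 2π`. -/
def nextVal {n : ℕ} (x : Fin n → ℝ) (j : Fin n) : ℝ :=
  if h : (j : ℕ) + 1 < n then x ⟨(j : ℕ) + 1, h⟩ else x ⟨0, j.pos⟩ + 2 * π

/-- The gap `θ^{j+1} - θ^j` (with wrap-around convention). -/
def gap {n : ℕ} (x : Fin n → ℝ) (j : Fin n) : ℝ := nextVal x j - x j

/-- The minimal gap `Δ(θ) = min_j (θ^{j+1} - θ^j)`. -/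
def minGap {n : ℕ} (x : Fin n → ℝ) : ℝ := ⨅ j : Fin n, gap x j

/-- `d(θ) := max_j |2π/n - (θ^{j+1} - θ^j)|`. -/
def dGap {n : ℕ} (x : Fin n → ℝ) : ℝ := ⨆ j : Fin n, |2 * π / n - gap x j|

/-- `φ^j(θ) = ∑_{k ≠ j} cot((θ^j - θ^k)/2)`. -/
def phi {n : ℕ} (x : Fin n → ℝ) (j : Fin n) : ℝ :=
  ∑ k ∈ Finset.univ.erase j, Real.cot ((x j - x k) / 2)

/-- `φ_a^j := (a/4) φ^j`. -/
def phiA {n : ℕ} (a : ℝ) (x : Fin n → ℝ) (j : Fin n) : ℝ := a / 4 * phi x j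

/-- Absolute continuity of every coordinate of `θ` on `[0, T]`: each component is the
integral of a (locally) integrable function. -/
def AbsCont {n : ℕ} (T : ℝ) (θ : ℝ → Fin n → ℝ) : Prop :=
  ∃ v : ℝ → Fin n → ℝ, (∀ j, IntegrableOn (fun s => v s j) (Icc 0 T)) ∧
    ∀ t ∈ Icc (0 : ℝ) T, ∀ j, θ t j = θ 0 j + ∫ s in (0 : ℝ)..t, v s j

/-- Truncated multiradial Dirichlet energy `J_T(θ)`. -/
def mEnergy (n : ℕ) (T : ℝ) (θ : ℝ → Fin n → ℝ) : ℝ≥0∞ :=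
  if AbsCont T θ then
    ENNReal.ofReal (1 / 2) *
      ∫⁻ s in Ioc (0 : ℝ) T,
        ENNReal.ofReal (∑ j, (deriv (fun t => θ t j) s - 2 * phi (θ s) j) ^ 2)
  else ⊤

/-- Multiradial Dirichlet energy `J(θ) = lim_{T→∞} J_T(θ)`, the supremum of the
nondecreasing family `J_T(θ)`. -/
def mEnergyInf (n : ℕ) (θ : ℝ → Fin n → ℝ) : ℝ≥0∞ := ⨆ T : ℝ, mEnergy n T θ

/-- Truncated multiradial Dirichlet energy with parameter `a`, `J^a_T(θ)`. -/
def mEnergyA (n : ℕ) (a T : ℝ) (θ : ℝ → Fin n → ℝ) : ℝ≥0∞ :=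
  if AbsCont T θ then
    ENNReal.ofReal (1 / 2) *
      ∫⁻ s in Ioc (0 : ℝ) T,
        ENNReal.ofReal (∑ j, (deriv (fun t => θ t j) s - 2 * phiA a (θ s) j) ^ 2)
  else ⊤

/-- `J^a(θ) = lim_{T→∞} J^a_T(θ)` (supremum of the nondecreasing family). -/
def mEnergyAInf (n : ℕ) (a : ℝ) (θ : ℝ → Fin n → ℝ) : ℝ≥0∞ := ⨆ T : ℝ, mEnergyA n a T θ

/-- Truncated Dirichlet energy `E_T(θ)`. -/
def dEnergy (n : ℕ) (T : ℝ) (θ : ℝ → Fin n → ℝ) : ℝ≥0∞ :=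
  if AbsCont T θ then
    ENNReal.ofReal (1 / 2) *
      ∫⁻ s in Ioc (0 : ℝ) T, ENNReal.ofReal (∑ j, deriv (fun t => θ t j) s ^ 2)
  else ⊤

/-- `E(θ) = lim_{T→∞} E_T(θ)` (supremum of the nondecreasing family). -/
def dEnergyInf (n : ℕ) (θ : ℝ → Fin n → ℝ) : ℝ≥0∞ := ⨆ T : ℝ, dEnergy n T θ

/-- `F(θ) := ∏_{j<k} |sin((θ^k - θ^j)/2)|`. -/
def Fprod {n : ℕ} (x : Fin n → ℝ) : ℝ :=
  ∏ j : Fin n, ∏ k ∈ Finset.univ.filter (fun k => j < k), |Real.sin ((x k - x j) / 2)|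

/-- `G_a(θ) := -a log F(θ)`. -/
def Ga {n : ℕ} (a : ℝ) (x : Fin n → ℝ) : ℝ := -(a * Real.log (Fprod x))

/-- `ψ(θ) := ∑_j ∑_{k≠j} csc²((θ^j - θ^k)/2)`. -/
def psi {n : ℕ} (x : Fin n → ℝ) : ℝ :=
  ∑ j : Fin n, ∑ k ∈ Finset.univ.erase j, (Real.sin ((x j - x k) / 2))⁻¹ ^ 2

/-- `ψ_a := (a/4) ψ`. -/
def psiA {n : ℕ} (a : ℝ) (x : Fin n → ℝ) : ℝ := a / 4 * psi x

/-- The radial interaction functional `Φ^{κ,a}_T(θ)`. -/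
def PhiK {n : ℕ} (κ a T : ℝ) (θ : ℝ → Fin n → ℝ) : ℝ :=
  Ga a (θ 0) - Ga a (θ T) +
    (1 / 2) * ∫ s in (0 : ℝ)..T, (κ * psiA a (θ s) - ∑ j, (2 * phiA a (θ s) j) ^ 2)

/-!
The drift `2φ_a` is minus the gradient of `G_a`. Expanding the square in `J^a_T` therefore leaves,
besides the Dirichlet energy and `½ ∫ |2φ_a|²`, only the cross term
`-∫ 2φ_a(θ) · dθ = ∫ ∇G_a(θ) · dθ`, which by the chain rule along absolutely continuous curves is
the boundary term `G_a(θ_T) - G_a(θ_0)`. The drift is bounded along `θ` and the velocity is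
integrable, so all these corrections are finite and the two energies are infinite simultaneously.
-/

section AbsolutelyContinuous

variable {X Y E F : Type*} [PseudoMetricSpace X] [PseudoMetricSpace Y]
  [NormedAddCommGroup E] [NormedSpace ℝ E] [NormedAddCommGroup F] [NormedSpace ℝ F] {a b : ℝ}

theorem absolutelyContinuousOnInterval_of_dist_le {f : ℝ → X} {g : ℝ → Y} {K : ℝ}
    (hf : AbsolutelyContinuousOnInterval f a b)
    (hfg : ∀ x ∈ uIcc a b, ∀ y ∈ uIcc a b, dist (g x) (g y) ≤ K * dist (f x) (f y)) :
    AbsolutelyContinuousOnInterval g a b := by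
  refine squeeze_zero' (Eventually.of_forall fun I => Finset.sum_nonneg fun _ _ => dist_nonneg) ?_
    (by simpa only [mul_zero] using Tendsto.const_mul K hf)
  refine eventually_inf_principal.2 (Eventually.of_forall fun I hI => ?_)
  rw [Finset.mul_sum]
  exact Finset.sum_le_sum fun i hi => hfg _ (hI.1 i hi).1 _ (hI.1 i hi).2

theorem absolutelyContinuousOnInterval_pi {ι : Type*} [Fintype ι] {u : ℝ → ι → X}
    (hu : ∀ i, AbsolutelyContinuousOnInterval (fun t => u t i) a b) :
    AbsolutelyContinuousOnInterval u a b := by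
  have htendsto := tendsto_finsetSum Finset.univ fun i _ => hu i
  simp only [Finset.sum_const_zero] at htendsto
  refine squeeze_zero (fun I => Finset.sum_nonneg fun _ _ => dist_nonneg) (fun I => ?_) htendsto
  rw [Finset.sum_comm]
  refine Finset.sum_le_sum fun m _ => (dist_pi_le_iff ?_).2 fun i => ?_
  · exact Finset.sum_nonneg fun _ _ => dist_nonneg
  · exact Finset.single_le_sum (f := fun i => dist (u (I.2 m).1 i) (u (I.2 m).2 i))
      (fun _ _ => dist_nonneg) (Finset.mem_univ i)

theorem absolutelyContinuousOnInterval_comp_of_contDiffAt {f : E → F} {u : ℝ → E}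
    (hf : ∀ t ∈ uIcc a b, ContDiffAt ℝ 1 f (u t)) (hu : AbsolutelyContinuousOnInterval u a b) :
    AbsolutelyContinuousOnInterval (fun t => f (u t)) a b := by
  have hlip : LocallyLipschitzOn (u '' uIcc a b) f := by
    rintro _ ⟨t, ht, rfl⟩
    obtain ⟨K, U, hU, hK⟩ := (hf t ht).exists_lipschitzOnWith
    exact ⟨K, U, mem_nhdsWithin_of_mem_nhds hU, hK⟩
  obtain ⟨K, hK⟩ := hlip.exists_lipschitzOnWith_of_compact
    (isCompact_uIcc.image_of_continuousOn hu.continuousOn)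
  exact absolutelyContinuousOnInterval_of_dist_le hu fun x hx y hy =>
    hK.dist_le_mul _ (mem_image_of_mem u hx) _ (mem_image_of_mem u hy)

theorem integral_fderiv_deriv_eq_sub [FiniteDimensional ℝ E] {V : E → ℝ} {u : ℝ → E}
    (hV : ∀ t ∈ uIcc a b, ContDiffAt ℝ 1 V (u t)) (hu : AbsolutelyContinuousOnInterval u a b) :
    ∫ t in a..b, fderiv ℝ V (u t) (deriv u t) = V (u b) - V (u a) := by
  rw [← (absolutelyContinuousOnInterval_comp_of_contDiffAt hV hu).integral_deriv_eq_sub]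
  refine intervalIntegral.integral_congr_ae ?_
  filter_upwards [hu.boundedVariationOn.ae_differentiableAt_of_mem_uIcc] with t ht htab
  have htab' : t ∈ uIcc a b := uIoc_subset_uIcc htab
  have hVt : DifferentiableAt ℝ V (u t) := (hV t htab').differentiableAt one_ne_zero
  exact (hVt.hasFDerivAt.comp_hasDerivAt t (ht htab').hasDerivAt).deriv.symm

end AbsolutelyContinuous

section IntegrablePerturbation

variable {α : Type*} [MeasurableSpace α] {μ : Measure α} {f r : α → ℝ}

theorem lintegral_ofReal_add_eq_top_iff (hfm : AEStronglyMeasurable f μ) (hr : Integrable r μ)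
    (hf : 0 ≤ᵐ[μ] f) (hfr : 0 ≤ᵐ[μ] f + r) :
    ∫⁻ x, ENNReal.ofReal (f x + r x) ∂μ = ⊤ ↔ ∫⁻ x, ENNReal.ofReal (f x) ∂μ = ⊤ :=
  not_iff_not.1 <| (lintegral_ofReal_ne_top_iff_integrable (hfm.add hr.1) hfr).trans <|
    (integrable_add_iff_integrable_left hr).trans
      (lintegral_ofReal_ne_top_iff_integrable hfm hf).symm

theorem toReal_lintegral_ofReal_add (hfm : AEStronglyMeasurable f μ) (hr : Integrable r μ)
    (hf : 0 ≤ᵐ[μ] f) (hfr : 0 ≤ᵐ[μ] f + r)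
    (hfin : ∫⁻ x, ENNReal.ofReal (f x) ∂μ ≠ ⊤) :
    (∫⁻ x, ENNReal.ofReal (f x + r x) ∂μ).toReal =
      (∫⁻ x, ENNReal.ofReal (f x) ∂μ).toReal + ∫ x, r x ∂μ := by
  have hfi : Integrable f μ := (lintegral_ofReal_ne_top_iff_integrable hfm hf).1 hfin
  rw [← integral_eq_lintegral_of_nonneg_ae hf hfm, ← integral_add hfi hr]
  exact (integral_eq_lintegral_of_nonneg_ae hfr (hfm.add hr.1)).symm

end IntegrablePerturbation

theorem sum_sub_sq {ι R : Type*} [CommRing R] (s : Finset ι) (f g : ι → R) :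
    ∑ i ∈ s, (f i - g i) ^ 2 =
      ∑ i ∈ s, f i ^ 2 + (∑ i ∈ s, g i ^ 2 - 2 * ∑ i ∈ s, g i * f i) := by
  rw [Finset.mul_sum, ← Finset.sum_sub_distrib, ← Finset.sum_add_distrib]
  exact Finset.sum_congr rfl fun i _ => by ring

theorem sum_sq_add_nonneg {ι : Type*} (s : Finset ι) (f g : ι → ℝ) :
    0 ≤ ∑ i ∈ s, f i ^ 2 + (∑ i ∈ s, g i ^ 2 - 2 * ∑ i ∈ s, g i * f i) := by
  rw [← sum_sub_sq]
  exact Finset.sum_nonneg fun _ _ => sq_nonneg _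

section Drift

variable {n : ℕ} {T : ℝ} {b θ : ℝ → Fin n → ℝ}

/-- The Dirichlet energy of `θ` relative to a time-dependent drift `b`,
`½ ∫₀ᵀ ∑ⱼ |dθʲ/ds - bʲ|² ds`, and `∞` if `θ` is not absolutely continuous. The energy
`J^a_T(θ)` is the case `b = 2φ_a(θ)`. -/
def driftEnergy (T : ℝ) (b θ : ℝ → Fin n → ℝ) : ℝ≥0∞ :=
  if AbsCont T θ then
    ENNReal.ofReal (1 / 2) *
      ∫⁻ s in Ioc (0 : ℝ) T, ENNReal.ofReal (∑ j, (deriv (fun t => θ t j) s - b s j) ^ 2)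
  else ⊤

theorem mEnergyA_eq_driftEnergy (a : ℝ) :
    mEnergyA n a T θ = driftEnergy T (fun s j => 2 * phiA a (θ s) j) θ :=
  rfl

theorem AbsCont.absolutelyContinuousOnInterval_apply (hT : 0 ≤ T) (h : AbsCont T θ) (j : Fin n) :
    AbsolutelyContinuousOnInterval (fun t => θ t j) 0 T := by
  obtain ⟨v, hv, hθ⟩ := h
  have hint : IntervalIntegrable (fun s => v s j) volume 0 T :=
    (intervalIntegrable_iff_integrableOn_Icc_of_le hT).2 (hv j)
  refine absolutelyContinuousOnInterval_of_dist_le (K := 1)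
    (hint.absolutelyContinuousOnInterval_intervalIntegral left_mem_uIcc) fun x hx y hy => ?_
  rw [uIcc_of_le hT] at hx hy
  simp only [hθ x hx j, hθ y hy j, dist_add_left, one_mul, le_refl]

theorem AbsCont.absolutelyContinuousOnInterval (hT : 0 ≤ T) (h : AbsCont T θ) :
    AbsolutelyContinuousOnInterval θ 0 T :=
  absolutelyContinuousOnInterval_pi (h.absolutelyContinuousOnInterval_apply hT)

theorem AbsCont.integral_fderiv_eq_sub {V : (Fin n → ℝ) → ℝ} (hT : 0 ≤ T) (h : AbsCont T θ)
    (hV : ∀ t ∈ Icc 0 T, ContDiffAt ℝ 1 V (θ t)) :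
    ∫ s in (0 : ℝ)..T, fderiv ℝ V (θ s) (fun j => deriv (fun t => θ t j) s) =
      V (θ T) - V (θ 0) := by
  have hθ := h.absolutelyContinuousOnInterval hT
  rw [← integral_fderiv_deriv_eq_sub (by rwa [uIcc_of_le hT]) hθ]
  refine intervalIntegral.integral_congr_ae ?_
  filter_upwards [hθ.boundedVariationOn.ae_differentiableAt_of_mem_uIcc] with s hs hsT
  rw [deriv_pi (differentiableAt_pi.1 (hs (uIoc_subset_uIcc hsT)))]

theorem AbsCont.intervalIntegrable_sum_mul_deriv (hT : 0 ≤ T) (h : AbsCont T θ)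
    (hb : ContinuousOn b (Icc 0 T)) :
    IntervalIntegrable (fun s => ∑ j, b s j * deriv (fun t => θ t j) s) volume 0 T := by
  rw [← uIcc_of_le hT] at hb
  simpa only [Finset.sum_fn] using IntervalIntegrable.sum Finset.univ fun j _ =>
    (h.absolutelyContinuousOnInterval_apply hT j).intervalIntegrable_deriv.continuousOn_mul
      (continuousOn_pi.1 hb j)

theorem intervalIntegrable_sum_sq (hT : 0 ≤ T) (hb : ContinuousOn b (Icc 0 T)) :
    IntervalIntegrable (fun s => ∑ j, b s j ^ 2) volume 0 T := by
  rw [← uIcc_of_le hT] at hb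
  exact (continuousOn_finsetSum _ fun j _ => (continuousOn_pi.1 hb j).pow 2).intervalIntegrable

theorem driftEnergy_of_absCont (h : AbsCont T θ) :
    driftEnergy T b θ = ENNReal.ofReal (1 / 2) * ∫⁻ s in Ioc (0 : ℝ) T,
      ENNReal.ofReal (∑ j, deriv (fun t => θ t j) s ^ 2 +
        (∑ j, b s j ^ 2 - 2 * ∑ j, b s j * deriv (fun t => θ t j) s)) := by
  simp only [driftEnergy, if_pos h, sum_sub_sq]

theorem dEnergy_of_absCont (h : AbsCont T θ) :
    dEnergy n T θ = ENNReal.ofReal (1 / 2) * ∫⁻ s in Ioc (0 : ℝ) T,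
      ENNReal.ofReal (∑ j, deriv (fun t => θ t j) s ^ 2) :=
  if_pos h

theorem absCont_of_dEnergy_ne_top (hfin : dEnergy n T θ ≠ ⊤) : AbsCont T θ := by
  by_contra h
  exact hfin (if_neg h)

theorem aestronglyMeasurable_sum_deriv_sq {μ : Measure ℝ} :
    AEStronglyMeasurable (fun s => ∑ j, deriv (fun t => θ t j) s ^ 2) μ :=
  (Finset.measurable_fun_sum _ fun j _ =>
    (measurable_deriv fun t => θ t j).pow_const 2).aestronglyMeasurable

theorem AbsCont.integrableOn_sum_sq_sub_sum_mul_deriv (hT : 0 ≤ T) (h : AbsCont T θ)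
    (hb : ContinuousOn b (Icc 0 T)) :
    IntegrableOn (fun s => ∑ j, b s j ^ 2 - 2 * ∑ j, b s j * deriv (fun t => θ t j) s)
      (Ioc 0 T) :=
  (intervalIntegrable_iff_integrableOn_Ioc_of_le hT).1 <|
    (intervalIntegrable_sum_sq hT hb).sub ((h.intervalIntegrable_sum_mul_deriv hT hb).const_mul 2)

theorem driftEnergy_eq_top_iff (hT : 0 ≤ T) (hb : ContinuousOn b (Icc 0 T)) :
    driftEnergy T b θ = ⊤ ↔ dEnergy n T θ = ⊤ := by
  by_cases h : AbsCont T θ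
  · have hhalf : ∀ x : ℝ≥0∞, ENNReal.ofReal (1 / 2) * x = ⊤ ↔ x = ⊤ := fun x => by
      simp [ENNReal.mul_eq_top]
    rw [driftEnergy_of_absCont h, dEnergy_of_absCont h, hhalf, hhalf]
    exact lintegral_ofReal_add_eq_top_iff aestronglyMeasurable_sum_deriv_sq
      (h.integrableOn_sum_sq_sub_sum_mul_deriv hT hb)
      (ae_of_all _ fun _ => Finset.sum_nonneg fun _ _ => sq_nonneg _)
      (ae_of_all _ fun _ => sum_sq_add_nonneg _ _ _)
  · simp only [driftEnergy, dEnergy, if_neg h]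

theorem toReal_driftEnergy (hT : 0 ≤ T) (hb : ContinuousOn b (Icc 0 T))
    (hfin : dEnergy n T θ ≠ ⊤) :
    (driftEnergy T b θ).toReal = (dEnergy n T θ).toReal +
      ((1 / 2) * ∫ s in (0 : ℝ)..T, ∑ j, b s j ^ 2) -
        ∫ s in (0 : ℝ)..T, ∑ j, b s j * deriv (fun t => θ t j) s := by
  have h := absCont_of_dEnergy_ne_top hfin
  rw [dEnergy_of_absCont h] at hfin ⊢
  rw [driftEnergy_of_absCont h, ENNReal.toReal_mul, ENNReal.toReal_mul,
    ENNReal.toReal_ofReal (by norm_num),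
    toReal_lintegral_ofReal_add aestronglyMeasurable_sum_deriv_sq
      (h.integrableOn_sum_sq_sub_sum_mul_deriv hT hb)
      (ae_of_all _ fun _ => Finset.sum_nonneg fun _ _ => sq_nonneg _)
      (ae_of_all _ fun _ => sum_sq_add_nonneg _ _ _)
      (ENNReal.lt_top_of_mul_ne_top_right hfin (by simp)).ne,
    ← intervalIntegral.integral_of_le hT,
    intervalIntegral.integral_sub (intervalIntegrable_sum_sq hT hb)
      ((h.intervalIntegrable_sum_mul_deriv hT hb).const_mul 2),
    intervalIntegral.integral_const_mul]
  ring

theorem toReal_driftEnergy_of_fderiv_eq {V : (Fin n → ℝ) → ℝ} (hT : 0 ≤ T)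
    (hb : ContinuousOn b (Icc 0 T)) (hV : ∀ t ∈ Icc 0 T, ContDiffAt ℝ 1 V (θ t))
    (hVb : ∀ t ∈ Icc 0 T, ∀ d, fderiv ℝ V (θ t) d = -∑ j, b t j * d j)
    (hfin : dEnergy n T θ ≠ ⊤) :
    (driftEnergy T b θ).toReal = (dEnergy n T θ).toReal +
      ((1 / 2) * ∫ s in (0 : ℝ)..T, ∑ j, b s j ^ 2) + (V (θ T) - V (θ 0)) := by
  have h := absCont_of_dEnergy_ne_top hfin
  rw [toReal_driftEnergy hT hb hfin, ← h.integral_fderiv_eq_sub hT hV, sub_eq_add_neg,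
    ← intervalIntegral.integral_neg]
  congr 1
  refine intervalIntegral.integral_congr fun s hs => ?_
  rw [uIcc_of_le hT] at hs
  exact (hVb s hs _).symm

end Drift

section CollisionFree

variable {n : ℕ} {a : ℝ} {x : Fin n → ℝ}

/-- Configurations of `n` points whose images on the circle `ℝ / 2πℤ` are pairwise distinct. It is
encoded by the nonvanishing of the sines in `F`, `φ` and `ψ`, and contains `𝒳ₙ`. -/
def collisionFree (n : ℕ) : Set (Fin n → ℝ) :=
  {x | ∀ j k, j ≠ k → Real.sin ((x j - x k) / 2) ≠ 0}

theorem Xspace_subset_collisionFree : Xspace n ⊆ collisionFree n := by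
  intro x hx j k hjk
  rcases hjk.lt_or_gt with h | h
  · have hlt := hx.1 h
    have hgap := hx.2 k j
    exact (Real.sin_neg_of_neg_of_neg_pi_lt (by linarith) (by linarith)).ne
  · have hlt := hx.1 h
    have hgap := hx.2 j k
    exact (Real.sin_pos_of_pos_of_lt_pi (by linarith) (by linarith)).ne'

theorem isOpen_collisionFree : IsOpen (collisionFree n) := by
  simp only [collisionFree, ofPred_forall]
  exact isOpen_iInter_of_finite fun j => isOpen_iInter_of_finite fun k =>
    isOpen_iInter_of_finite fun _ => isOpen_ne_fun (by fun_prop) continuous_const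

theorem continuousOn_phi (j : Fin n) : ContinuousOn (fun x => phi x j) (collisionFree n) := by
  unfold phi
  refine continuousOn_finsetSum _ fun k hk => ?_
  simp only [Real.cot_eq_cos_div_sin]
  exact ContinuousOn.div (by fun_prop) (by fun_prop) fun x hx =>
    hx j k (Finset.ne_of_mem_erase hk).symm

theorem Ga_eq_sum (hx : x ∈ collisionFree n) :
    Ga a x = -(a * ∑ j, ∑ k ∈ Finset.Ioi j, Real.log (Real.sin ((x k - x j) / 2))) := by
  have hne : ∀ j : Fin n, ∀ k ∈ Finset.Ioi j, |Real.sin ((x k - x j) / 2)| ≠ 0 := fun j k hk =>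
    abs_ne_zero.2 (hx k j (Finset.mem_Ioi.1 hk).ne')
  simp only [Ga, Fprod, Finset.filter_lt_eq_Ioi]
  rw [Real.log_prod fun j _ => Finset.prod_ne_zero_iff.2 (hne j)]
  simp only [Real.log_prod (hne _), Real.log_abs]

theorem Ga_eventuallyEq_sum (hx : x ∈ collisionFree n) :
    Ga a =ᶠ[𝓝 x] fun y =>
      -(a * ∑ j, ∑ k ∈ Finset.Ioi j, Real.log (Real.sin ((y k - y j) / 2))) :=
  (isOpen_collisionFree.eventually_mem hx).mono fun _ hy => Ga_eq_sum hy

theorem contDiffAt_Ga (hx : x ∈ collisionFree n) : ContDiffAt ℝ 1 (Ga a) x := by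
  refine ContDiffAt.congr_of_eventuallyEq ?_ (Ga_eventuallyEq_sum hx)
  refine (contDiffAt_const.mul ?_).neg
  refine ContDiffAt.sum fun j _ => ContDiffAt.sum fun k hk => ?_
  exact ContDiffAt.log (by fun_prop) (hx k j (Finset.mem_Ioi.1 hk).ne')

theorem sum_sum_Ioi_smul_sub {ι R M : Type*} [Fintype ι] [LinearOrder ι]
    [LocallyFiniteOrderTop ι] [LocallyFiniteOrderBot ι] [Ring R] [AddCommGroup M] [Module R M]
    {c : ι → ι → R} (hc : ∀ j k, c j k = -c k j) (v : ι → M) :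
    ∑ j, ∑ k ∈ Finset.Ioi j, c k j • (v k - v j) = ∑ j, (∑ k ∈ {j}ᶜ, c j k) • v j := by
  simp only [Finset.sum_smul]
  rw [← Finset.sum_sum_Ioi_add_eq_sum_sum_off_diag fun k j => c j k • v j]
  refine Finset.sum_congr rfl fun j _ => Finset.sum_congr rfl fun k _ => ?_
  rw [smul_sub, hc j k, neg_smul, neg_add_eq_sub]

theorem cot_half_sub_antisymm (s t : ℝ) : Real.cot ((s - t) / 2) = -Real.cot ((t - s) / 2) := by
  rw [← neg_sub, neg_div, Real.cot_eq_cos_div_sin, Real.cot_eq_cos_div_sin, Real.cos_neg,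
    Real.sin_neg, div_neg]

theorem hasFDerivAt_log_sin_half_sub {j k : Fin n} (h : Real.sin ((x k - x j) / 2) ≠ 0) :
    HasFDerivAt (fun y : Fin n → ℝ => Real.log (Real.sin ((y k - y j) / 2)))
      ((Real.cot ((x k - x j) / 2) / 2) • (.proj k - .proj j : (Fin n → ℝ) →L[ℝ] ℝ)) x := by
  have hdiff : HasFDerivAt (fun y : Fin n → ℝ => (y k - y j) / 2)
      ((2⁻¹ : ℝ) • (.proj k - .proj j : (Fin n → ℝ) →L[ℝ] ℝ)) x := by
    simp only [div_eq_mul_inv]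
    exact ((hasFDerivAt_apply k x).fun_sub (hasFDerivAt_apply j x)).mul_const 2⁻¹
  refine (hdiff.sin.log h).congr_fderiv ?_
  rw [Real.cot_eq_cos_div_sin, smul_smul, smul_smul]
  congr 1
  ring

theorem fderiv_Ga_apply (hx : x ∈ collisionFree n) (d : Fin n → ℝ) :
    fderiv ℝ (Ga a) x d = -∑ j, 2 * phiA a x j * d j := by
  have hsum := HasFDerivAt.fun_sum (u := Finset.univ) fun (j : Fin n) _ =>
    HasFDerivAt.fun_sum (u := Finset.Ioi j) fun k hk =>
      hasFDerivAt_log_sin_half_sub (hx k j (Finset.mem_Ioi.1 hk).ne')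
  rw [sum_sum_Ioi_smul_sub (c := fun k j => Real.cot ((x k - x j) / 2) / 2)
    fun j k => by rw [cot_half_sub_antisymm, neg_div]] at hsum
  have hphi : ∀ j, ∑ k ∈ {j}ᶜ, Real.cot ((x j - x k) / 2) / 2 = phi x j / 2 := fun j => by
    rw [phi, ← Finset.compl_singleton, Finset.sum_div]
  simp only [hphi] at hsum
  rw [((hsum.const_mul a).fun_neg.congr_of_eventuallyEq (Ga_eventuallyEq_sum hx)).fderiv]
  simp only [neg_apply, smul_apply, sum_apply, ContinuousLinearMap.proj_apply, smul_eq_mul,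
    Finset.mul_sum, phiA]
  congr 1
  refine Finset.sum_congr rfl fun j _ => ?_
  ring

end CollisionFree

theorem multiradial_energy_decomposition_general {n : ℕ} {T : ℝ} (hT : 0 ≤ T) (a : ℝ)
    {θ : ℝ → Fin n → ℝ} (hcont : ContinuousOn θ (Icc 0 T))
    (hθ : ∀ t ∈ Icc (0 : ℝ) T, θ t ∈ collisionFree n) :
    IntervalIntegrable (fun s => ∑ j, (2 * phiA a (θ s) j) ^ 2) volume 0 T ∧
    (mEnergyA n a T θ = ⊤ ↔ dEnergy n T θ = ⊤) ∧
    (mEnergyA n a T θ ≠ ⊤ →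
      (mEnergyA n a T θ).toReal = (dEnergy n T θ).toReal - PhiK 0 a T θ) := by
  have hdrift : ContinuousOn (fun s j => 2 * phiA a (θ s) j) (Icc 0 T) := continuousOn_pi.2 fun j =>
    (((continuousOn_phi j).comp hcont hθ).const_mul (a / 4)).const_mul 2
  rw [mEnergyA_eq_driftEnergy]
  have htop := driftEnergy_eq_top_iff (θ := θ) hT hdrift
  refine ⟨intervalIntegrable_sum_sq hT hdrift, htop, fun hfin => ?_⟩
  rw [toReal_driftEnergy_of_fderiv_eq hT hdrift (fun t ht => contDiffAt_Ga (hθ t ht))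
    (fun t ht => fderiv_Ga_apply (hθ t ht)) (mt htop.2 hfin)]
  simp only [PhiK, zero_mul, zero_sub, intervalIntegral.integral_neg]
  ring

/-- For continuous `θ : [0,T] → 𝒳ₙ`, the interaction functional
`Φ^{0,a}_T(θ)` is a genuine (finite) real quantity — its integrand is integrable —
and `J^a_T(θ) = E_T(θ) - Φ^{0,a}_T(θ)` holds in `[0,∞]`: both sides are infinite
simultaneously, and when finite their real values satisfy the identity. -/
theorem multiradial_energy_decomposition
    (n : ℕ) (hn : 1 ≤ n) (T a : ℝ) (hT : 0 < T) (ha : 0 < a)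
    (θ : ℝ → Fin n → ℝ)
    (hcont : ContinuousOn θ (Icc 0 T))
    (hX : ∀ t ∈ Icc (0 : ℝ) T, θ t ∈ Xspace n) :
    IntervalIntegrable (fun s => ∑ j, (2 * phiA a (θ s) j) ^ 2) volume 0 T ∧
    (mEnergyA n a T θ = ⊤ ↔ dEnergy n T θ = ⊤) ∧
    (mEnergyA n a T θ ≠ ⊤ →
      (mEnergyA n a T θ).toReal = (dEnergy n T θ).toReal - PhiK 0 a T θ) := by
  exact multiradial_energy_decomposition_general hT.le a hcont fun t ht =>
    Xspace_subset_collisionFree (hX t ht)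

end
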